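/- Fix t > 0 with t ≠ 2 and x ∈ ℝ, and let F_n'(x) denote the derivative in x of F_n(x) = Φ(g_n)^{n} − (1 − Φ(g_n))^{n} where g_n = (c_n x + d_n)^{1/t}, defined for n large enough that c_n x + d_n > 0. Then as n → ∞, F_n'(x) = Λ(x) e^{−x} ( 1 + b_n^{−2} ( ϖ + b_n^{−2} τ + O(b_n^{−4}) ) ), where ϖ = x(1 − t + ((t−2)/2) x) + e^{−x}(1 + x + ((2−t)/2) x²) and τ = x e^{−x}(1 − t + ((t−2)/2) x)(1 + x + ((2−t)/2) x²) + x² ( (1−t)(1−2t)/2 + (5(1−t)(t−2)/6) x + ((t−2)²/8) x² ) − e^{−x} ( 3 + 3x + (3/2) x² + ((2−t)(2t+1)/6) x³ + ((t−2)²/8) x⁴ − (e^{−x}/2)(1 + x + ((2−t)/2) x²)² ). -/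

import Mathlib

open Real Filter Topology

/-- The standard normal distribution function. -/
noncomputable def stdNormalCDF (x : ℝ) : ℝ :=
  ∫ u in Set.Iic x, Real.exp (-u ^ 2 / 2) / Real.sqrt (2 * Real.pi)

/-- The Gumbel distribution function `Λ(x) = exp(−e^{−x})`. -/
noncomputable def gumbel (x : ℝ) : ℝ := Real.exp (-Real.exp (-x))

/-!
Write `φ = Φ'`, `h = b_n⁻²`, `u = 1 + t x h` and `q = 1 - Φ(g_n)`. The equation defining `b_n` says
`n φ(b_n) = b_n`, and `g_n = b_n u ^ (1 / t)`, so that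
`F_n'(x) = φ(g_n) / φ(b_n) * u ^ ((1 - t) / t) * ((1 - q) ^ (n - 1) + q ^ (n - 1))`.
Each factor has an expansion in powers of `h`. The density ratio is
`exp (-(u ^ (2 / t) - 1) / (2 h))` and `u ^ p` is a binomial series. The expected number of
exceedances is `n q = φ(g_n) / φ(b_n) * u ^ (-1 / t) * (g_n (1 - Φ(g_n)) / φ(g_n))`, which the
asymptotic series of the Mills ratio expands. Since `1 / n` is smaller than every power of `h`,
`(1 - q) ^ (n - 1)` may be replaced by `exp (-n q)` and `q ^ (n - 1)` by zero.
-/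

open Asymptotics MeasureTheory ProbabilityTheory

/-! ### Second-order asymptotic expansions -/

/-- `f = a₀ + a₁ h + a₂ h² + O(h³)` along `l`: the second-order expansion of `f` in the scale `h`,
meant for a scale tending to `0`. -/
def HasQuadExpansion {ι : Type*} (l : Filter ι) (h f : ι → ℝ) (a₀ a₁ a₂ : ℝ) : Prop :=
  (fun i => f i - (a₀ + a₁ * h i + a₂ * h i ^ 2)) =O[l] fun i => h i ^ 3

namespace HasQuadExpansion

variable {ι κ : Type*} {l : Filter ι} {m : Filter κ} {h f g r : ι → ℝ}
  {a₀ a₁ a₂ b₀ b₁ b₂ : ℝ}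

lemma const (a : ℝ) : HasQuadExpansion l h (fun _ => a) a 0 0 := by
  simpa [HasQuadExpansion] using isBigO_zero (fun i => h i ^ 3) l

lemma self : HasQuadExpansion l h h 0 1 0 := by
  simpa [HasQuadExpansion] using isBigO_zero (fun i => h i ^ 3) l

lemma congr_coeff (hf : HasQuadExpansion l h f a₀ a₁ a₂) (h₀ : a₀ = b₀) (h₁ : a₁ = b₁)
    (h₂ : a₂ = b₂) : HasQuadExpansion l h f b₀ b₁ b₂ :=
  h₀ ▸ h₁ ▸ h₂ ▸ hf

lemma congr' (hf : HasQuadExpansion l h f a₀ a₁ a₂) (hfg : f =ᶠ[l] g) :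
    HasQuadExpansion l h g a₀ a₁ a₂ :=
  IsBigO.congr' hf (hfg.mono fun i hi => by simp only [hi]) EventuallyEq.rfl

lemma add_isBigO (hf : HasQuadExpansion l h f a₀ a₁ a₂) (hr : r =O[l] fun i => h i ^ 3) :
    HasQuadExpansion l h (fun i => f i + r i) a₀ a₁ a₂ :=
  (IsBigO.add hf hr).congr_left fun i => by ring

lemma add (hf : HasQuadExpansion l h f a₀ a₁ a₂) (hg : HasQuadExpansion l h g b₀ b₁ b₂) :
    HasQuadExpansion l h (fun i => f i + g i) (a₀ + b₀) (a₁ + b₁) (a₂ + b₂) :=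
  (IsBigO.add hf hg).congr_left fun i => by ring

lemma tendsto (hh : Tendsto h l (𝓝 0)) (hf : HasQuadExpansion l h f a₀ a₁ a₂) :
    Tendsto f l (𝓝 a₀) := by
  have remainder : Tendsto (fun i => f i - (a₀ + a₁ * h i + a₂ * h i ^ 2)) l (𝓝 0) :=
    IsBigO.trans_tendsto hf (by simpa using hh.pow 3)
  have polynomial : Tendsto (fun i => a₀ + a₁ * h i + a₂ * h i ^ 2) l (𝓝 a₀) := by
    simpa using ((hh.const_mul a₁).const_add a₀).add ((hh.pow 2).const_mul a₂)
  simpa using remainder.add polynomial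

lemma isBigO_one (hh : Tendsto h l (𝓝 0)) (hf : HasQuadExpansion l h f a₀ a₁ a₂) :
    f =O[l] fun _ => (1 : ℝ) :=
  (hf.tendsto hh).isBigO_one ℝ

lemma mul (hh : Tendsto h l (𝓝 0)) (hf : HasQuadExpansion l h f a₀ a₁ a₂)
    (hg : HasQuadExpansion l h g b₀ b₁ b₂) :
    HasQuadExpansion l h (fun i => f i * g i) (a₀ * b₀) (a₀ * b₁ + a₁ * b₀)
      (a₀ * b₂ + a₁ * b₁ + a₂ * b₀) := by
  have bounded_mul {p q : ι → ℝ} (hp : p =O[l] fun _ => (1 : ℝ)) (hq : q =O[l] fun i => h i ^ 3) :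
      (fun i => p i * q i) =O[l] fun i => h i ^ 3 := by
    simpa using hp.mul hq
  have polynomial : Tendsto (fun i => a₀ + a₁ * h i + a₂ * h i ^ 2) l
      (𝓝 (a₀ + a₁ * 0 + a₂ * 0 ^ 2)) :=
    ((hh.const_mul a₁).const_add a₀).add ((hh.pow 2).const_mul a₂)
  have excess : Tendsto (fun i => a₁ * b₂ + a₂ * b₁ + a₂ * b₂ * h i) l
      (𝓝 (a₁ * b₂ + a₂ * b₁ + a₂ * b₂ * 0)) := (hh.const_mul _).const_add _
  refine (((bounded_mul (hg.isBigO_one hh) hf).add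
    (bounded_mul (polynomial.isBigO_one ℝ) hg)).add
    (bounded_mul (excess.isBigO_one ℝ) (isBigO_refl _ l))).congr_left fun i => ?_
  ring

lemma const_mul (hf : HasQuadExpansion l h f a₀ a₁ a₂) (a : ℝ) :
    HasQuadExpansion l h (fun i => a * f i) (a * a₀) (a * a₁) (a * a₂) :=
  (IsBigO.const_mul_left hf a).congr_left fun i => by ring

lemma isBigO_scale (hh : Tendsto h l (𝓝 0)) (hf : HasQuadExpansion l h f 0 a₁ a₂) :
    f =O[l] h := by
  have cube : (fun i => h i ^ 3) =O[l] h :=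
    (((hh.pow 2).isBigO_one ℝ).mul (isBigO_refl h l)).congr (fun i => by ring) (fun i => by ring)
  have polynomial : (fun i => (a₁ + a₂ * h i) * h i) =O[l] h := by
    simpa using (((hh.const_mul a₂).const_add a₁).isBigO_one ℝ).mul (isBigO_refl h l)
  exact ((IsBigO.trans hf cube).add polynomial).congr_left fun i => by ring

lemma comp {k u : κ → ℝ} {v : ι → κ} {c₀ c₁ c₂ : ℝ} (hu : HasQuadExpansion m k u c₀ c₁ c₂)
    (hv : Tendsto v l m) (hh : Tendsto h l (𝓝 0))
    (hk : HasQuadExpansion l h (fun i => k (v i)) 0 a₁ a₂) :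
    HasQuadExpansion l h (fun i => u (v i)) c₀ (c₁ * a₁) (c₁ * a₂ + c₂ * a₁ ^ 2) := by
  have remainder : (fun i => u (v i) - (c₀ + c₁ * k (v i) + c₂ * k (v i) ^ 2)) =O[l]
      fun i => h i ^ 3 :=
    (IsBigO.comp_tendsto hu hv).trans ((hk.isBigO_scale hh).pow 3)
  have polynomial := ((const c₀).add (hk.const_mul c₁)).add ((hk.mul hh hk).const_mul c₂)
  exact ((polynomial.add_isBigO remainder).congr' (.of_forall fun i => by ring)).congr_coeff
    (by ring) (by ring) (by ring)

lemma exp_nhds_zero : HasQuadExpansion (𝓝 0) id Real.exp 1 1 (1 / 2) := by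
  refine (Real.exp_sub_sum_range_isBigO_pow 3).congr_left fun y => ?_
  simp only [Finset.sum_range_succ, Finset.sum_range_zero, Nat.factorial, id]
  norm_num
  ring

lemma exp (hh : Tendsto h l (𝓝 0)) (hf : HasQuadExpansion l h f a₀ a₁ a₂) :
    HasQuadExpansion l h (fun i => Real.exp (f i)) (Real.exp a₀) (Real.exp a₀ * a₁)
      (Real.exp a₀ * (a₂ + a₁ ^ 2 / 2)) := by
  have centered : HasQuadExpansion l h (fun i => f i + -a₀) 0 a₁ a₂ :=
    (hf.add (const (-a₀))).congr_coeff (by ring) (by ring) (by ring)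
  have exp_centered := exp_nhds_zero.comp (centered.tendsto hh) hh centered
  refine ((exp_centered.const_mul (Real.exp a₀)).congr' (.of_forall fun i => ?_)).congr_coeff
    (by ring) (by ring) (by ring)
  simp only [← Real.exp_add]
  ring_nf

end HasQuadExpansion

/-! ### The binomial series -/

lemma ring_choose_eq_prod_div {K : Type*} [Field K] [CharZero K] (a : K) (n : ℕ) :
    Ring.choose a n = (∏ k ∈ Finset.range n, (a - k)) / n.factorial := by
  rw [Ring.choose_eq_smul, ← descPochhammer_eval_eq_prod_range,
    ← descPochhammer_map (Int.castRingHom K), Polynomial.eval_map,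
    ← Polynomial.eval₂_smulOneHom_eq_smeval, smul_eq_mul, div_eq_inv_mul]
  congr
  exact RingHom.ext_int _ _

lemma isBigO_one_add_rpow_sub_sum (a : ℝ) (n : ℕ) :
    (fun y : ℝ => (1 + y) ^ a - ∑ k ∈ Finset.range n, Ring.choose a k * y ^ k) =O[𝓝 0]
      fun y => y ^ n := by
  have taylor := (one_add_rpow_hasFPowerSeriesAt_zero (a := a)).isBigO_sub_partialSum_pow n
  simp only [← norm_pow, isBigO_norm_right] at taylor
  refine taylor.congr_left fun y => ?_
  simp [FormalMultilinearSeries.partialSum, binomialSeries, FormalMultilinearSeries.coeff_ofScalars,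
    mul_comm]

namespace HasQuadExpansion

variable {ι : Type*} {l : Filter ι} {h : ι → ℝ}

lemma one_add_rpow_nhds_zero (a : ℝ) :
    HasQuadExpansion (𝓝 0) id (fun y => (1 + y) ^ a) 1 a (a * (a - 1) / 2) := by
  refine (isBigO_one_add_rpow_sub_sum a 3).congr_left fun y => ?_
  simp only [Finset.sum_range_succ, Finset.sum_range_zero, ring_choose_eq_prod_div,
    Finset.prod_range_succ, Finset.prod_range_zero, Nat.factorial, id]
  push_cast
  ring

lemma one_add_mul_rpow (hh : Tendsto h l (𝓝 0)) (s a : ℝ) :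
    HasQuadExpansion l h (fun i => (1 + s * h i) ^ a) 1 (a * s) (a * (a - 1) / 2 * s ^ 2) :=
  have scaled : HasQuadExpansion l h (fun i => s * h i) 0 s 0 :=
    (self.const_mul s).congr_coeff (by ring) (by ring) (by ring)
  ((one_add_rpow_nhds_zero a).comp (scaled.tendsto hh) hh scaled).congr_coeff rfl rfl (by ring)

lemma one_add_mul_rpow_slope (hh : Tendsto h l (𝓝 0)) (h_ne : ∀ᶠ i in l, h i ≠ 0) (s a : ℝ) :
    HasQuadExpansion l h (fun i => ((1 + s * h i) ^ a - 1) / h i) (a * s)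
      (a * (a - 1) / 2 * s ^ 2) (a * (a - 1) * (a - 2) / 6 * s ^ 3) := by
  have scaled : Tendsto (fun i => s * h i) l (𝓝 0) := by simpa using hh.const_mul s
  have taylor := ((isBigO_one_add_rpow_sub_sum a 4).comp_tendsto scaled).trans
    (((isBigO_refl h l).const_mul_left s).pow 4)
  refine (taylor.mul (isBigO_refl (fun i => (h i)⁻¹) l)).congr' ?_ ?_
  · filter_upwards [h_ne] with i hi
    simp only [Function.comp_apply, Finset.sum_range_succ, Finset.sum_range_zero,
      ring_choose_eq_prod_div, Finset.prod_range_succ, Finset.prod_range_zero, Nat.factorial]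
    field_simp
    push_cast
    ring
  · filter_upwards [h_ne] with i hi
    field_simp

end HasQuadExpansion

/-! ### Powers of sequences close to one -/

lemma isBigO_sum_range_add_log_one_sub (n : ℕ) :
    (fun y : ℝ => ∑ k ∈ Finset.range n, y ^ (k + 1) / (k + 1) + log (1 - y)) =O[𝓝 0]
      fun y => y ^ (n + 1) := by
  refine .of_bound 2 ?_
  have small : ∀ᶠ y : ℝ in 𝓝 0, |y| < 1 / 2 := by
    simpa using eventually_norm_sub_lt (0 : ℝ) one_half_pos
  filter_upwards [small] with y hy
  calc ‖∑ k ∈ Finset.range n, y ^ (k + 1) / (k + 1) + log (1 - y)‖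
      ≤ |y| ^ (n + 1) / (1 - |y|) := abs_log_sub_add_sum_range_le (by linarith) n
    _ ≤ |y| ^ (n + 1) / (1 / 2) := by gcongr; linarith
    _ = 2 * ‖y ^ (n + 1)‖ := by rw [norm_pow, norm_eq_abs]; ring

lemma isBigO_pow_pred_of_tendsto_zero {q : ℕ → ℝ} (hq : Tendsto q atTop (𝓝 0)) :
    (fun n => q n ^ (n - 1)) =O[atTop] q := by
  refine .of_bound' ?_
  filter_upwards [hq.norm.eventually_le_const (by simp : ‖(0 : ℝ)‖ < 1), eventually_ge_atTop 2]
    with n hn hn2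
  rw [norm_pow]
  exact pow_le_of_le_one (norm_nonneg _) hn (by lia)

lemma isBigO_inv_natCast_of_mul_isBigO_one {q : ℕ → ℝ}
    (hq : (fun n : ℕ => n * q n) =O[atTop] fun _ => (1 : ℝ)) :
    q =O[atTop] fun n : ℕ => (n : ℝ)⁻¹ := by
  refine (hq.mul (isBigO_refl (fun n : ℕ => (n : ℝ)⁻¹) atTop)).congr' ?_
    (.of_forall fun n => one_mul _)
  filter_upwards [eventually_ne_atTop 0] with n hn
  field_simp

namespace HasQuadExpansion

variable {h q : ℕ → ℝ} {q₀ q₁ q₂ : ℝ}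

lemma pred_mul_log_one_sub (hh : Tendsto h atTop (𝓝 0))
    (hn : (fun n : ℕ => (n : ℝ)⁻¹) =O[atTop] fun n => h n ^ 3)
    (hq : HasQuadExpansion atTop h (fun n => n * q n) q₀ q₁ q₂) :
    HasQuadExpansion atTop h (fun n => (n - 1 : ℕ) * log (1 - q n)) (-q₀) (-q₁) (-q₂) := by
  have q_isBigO := isBigO_inv_natCast_of_mul_isBigO_one (hq.isBigO_one hh)
  have log_isBigO : (fun n => log (1 - q n) + q n) =O[atTop] fun n => q n * q n := by
    refine ((isBigO_sum_range_add_log_one_sub 1).comp_tendsto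
      (q_isBigO.trans_tendsto tendsto_inv_atTop_nhds_zero_nat)).congr (fun n => ?_) (fun n => ?_)
    · simp [add_comm]
    · simp [sq]
  have pred_isBigO : (fun n : ℕ => ((n - 1 : ℕ) : ℝ)) =O[atTop] fun n => (n : ℝ) :=
    .of_norm_le fun n => by simp
  have remainder : (fun n : ℕ => (n - 1 : ℕ) * (log (1 - q n) + q n) + q n) =O[atTop]
      fun n => h n ^ 3 := by
    refine .add ?_ (q_isBigO.trans hn)
    calc (fun n : ℕ => (n - 1 : ℕ) * (log (1 - q n) + q n))
        =O[atTop] fun n => n * (q n * q n) := pred_isBigO.mul log_isBigO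
      _ =O[atTop] fun n => h n ^ 3 := by
        simpa [mul_assoc] using (hq.isBigO_one hh).mul (q_isBigO.trans hn)
  refine (((hq.const_mul (-1)).add_isBigO remainder).congr' ?_).congr_coeff
    (by ring) (by ring) (by ring)
  filter_upwards [eventually_ge_atTop 1] with n hn
  push_cast [hn]
  ring

lemma one_sub_pow_pred (hh : Tendsto h atTop (𝓝 0))
    (hn : (fun n : ℕ => (n : ℝ)⁻¹) =O[atTop] fun n => h n ^ 3)
    (hq : HasQuadExpansion atTop h (fun n => n * q n) q₀ q₁ q₂) :
    HasQuadExpansion atTop h (fun n => (1 - q n) ^ (n - 1)) (Real.exp (-q₀))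
      (Real.exp (-q₀) * -q₁) (Real.exp (-q₀) * (-q₂ + q₁ ^ 2 / 2)) := by
  have q_tendsto : Tendsto q atTop (𝓝 0) :=
    (isBigO_inv_natCast_of_mul_isBigO_one (hq.isBigO_one hh)).trans_tendsto
      tendsto_inv_atTop_nhds_zero_nat
  refine (((hq.pred_mul_log_one_sub hh hn).exp hh).congr' ?_).congr_coeff rfl rfl (by ring)
  filter_upwards [q_tendsto.eventually_lt_const one_pos] with n hqn
  rw [Real.exp_nat_mul, Real.exp_log (by linarith)]

lemma one_sub_pow_pred_add_pow_pred (hh : Tendsto h atTop (𝓝 0))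
    (hn : (fun n : ℕ => (n : ℝ)⁻¹) =O[atTop] fun n => h n ^ 3)
    (hq : HasQuadExpansion atTop h (fun n => n * q n) q₀ q₁ q₂) :
    HasQuadExpansion atTop h (fun n => (1 - q n) ^ (n - 1) + q n ^ (n - 1)) (Real.exp (-q₀))
      (Real.exp (-q₀) * -q₁) (Real.exp (-q₀) * (-q₂ + q₁ ^ 2 / 2)) := by
  have q_isBigO := isBigO_inv_natCast_of_mul_isBigO_one (hq.isBigO_one hh)
  have q_tendsto := q_isBigO.trans_tendsto tendsto_inv_atTop_nhds_zero_nat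
  exact (hq.one_sub_pow_pred hh hn).add_isBigO
    (((isBigO_pow_pred_of_tendsto_zero q_tendsto).trans q_isBigO).trans hn)

end HasQuadExpansion

/-! ### The Mills ratio of the normal distribution -/

local notation "φ" => gaussianPDFReal 0 1

lemma stdNormalPDF_eq (y : ℝ) : φ y = Real.exp (-y ^ 2 / 2) / √(2 * π) := by
  simp [gaussianPDFReal, div_eq_inv_mul]

lemma stdNormalPDF_pos (y : ℝ) : 0 < φ y :=
  gaussianPDFReal_pos 0 1 y one_ne_zero

lemma hasDerivAt_gaussianPDFReal (μ : ℝ) (v : NNReal) (y : ℝ) :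
    HasDerivAt (gaussianPDFReal μ v) (-((y - μ) / v) * gaussianPDFReal μ v y) y := by
  have exponent : HasDerivAt (fun z : ℝ => -(z - μ) ^ 2 / (2 * v)) (-((y - μ) / v)) y :=
    ((((hasDerivAt_id y).sub_const μ).pow 2).neg.div_const (2 * v : ℝ)).congr_deriv (by
      simp only [id]; ring)
  exact (exponent.exp.const_mul (√(2 * π * v))⁻¹).congr_deriv (by
    simp only [gaussianPDFReal]; ring)

lemma hasDerivAt_stdNormalPDF (y : ℝ) : HasDerivAt φ (-y * φ y) y := by
  simpa using hasDerivAt_gaussianPDFReal 0 1 y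

lemma isBigO_stdNormalPDF_inv_pow (k : ℕ) : φ =O[atTop] fun y : ℝ => y⁻¹ ^ k := by
  have decay : (fun y : ℝ => y ^ (k : ℝ) * Real.exp (-(1 / 2) * y ^ 2)) =O[atTop]
      fun _ => (1 : ℝ) :=
    (rpow_mul_exp_neg_mul_sq_isLittleO_exp_neg one_half_pos k).isBigO.trans <|
      (tendsto_exp_atBot.comp (tendsto_id.const_mul_atTop_of_neg (by norm_num))).isBigO_one ℝ
  refine ((decay.mul (isBigO_refl (fun y : ℝ => y⁻¹ ^ k) atTop)).const_mul_left
    (√(2 * π))⁻¹).congr' ?_ (.of_forall fun y => one_mul _)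
  filter_upwards [eventually_gt_atTop 0] with y hy
  rw [stdNormalPDF_eq, rpow_natCast, inv_pow]
  field_simp

lemma tendsto_stdNormalPDF_atTop : Tendsto φ atTop (𝓝 0) :=
  (isBigO_stdNormalPDF_inv_pow 1).trans_tendsto (by simpa using tendsto_inv_atTop_zero)

lemma stdNormalCDF_eq_integral (y : ℝ) : stdNormalCDF y = ∫ u in Set.Iic y, φ u := by
  simp only [stdNormalCDF, stdNormalPDF_eq]

lemma hasDerivAt_integral_Iic {E : Type*} [NormedAddCommGroup E] [NormedSpace ℝ E]
    [CompleteSpace E] {f : ℝ → E} (hf : Integrable f) (hfc : Continuous f) (y : ℝ) :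
    HasDerivAt (fun z => ∫ u in Set.Iic z, f u) (f y) y := by
  have split : (fun z => ∫ u in Set.Iic z, f u) =
      fun z => (∫ u in Set.Iic 0, f u) + ∫ u in (0 : ℝ)..z, f u := by
    funext z
    rw [← intervalIntegral.integral_Iic_sub_Iic hf.integrableOn hf.integrableOn,
      add_sub_cancel]
  rw [split]
  exact (intervalIntegral.integral_hasDerivAt_right (hfc.intervalIntegrable _ _)
    hfc.stronglyMeasurable.stronglyMeasurableAtFilter hfc.continuousAt).const_add _

lemma hasDerivAt_stdNormalCDF (y : ℝ) : HasDerivAt stdNormalCDF (φ y) y := by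
  rw [funext stdNormalCDF_eq_integral]
  exact hasDerivAt_integral_Iic (integrable_gaussianPDFReal 0 1)
    (continuous_iff_continuousAt.2 fun z => (hasDerivAt_stdNormalPDF z).continuousAt) y

lemma tendsto_stdNormalCDF_atTop : Tendsto stdNormalCDF atTop (𝓝 1) := by
  rw [funext stdNormalCDF_eq_integral, ← integral_gaussianPDFReal_eq_one 0 one_ne_zero]
  exact (aecover_Iic tendsto_id).integral_tendsto_of_countably_generated
    (integrable_gaussianPDFReal 0 1)

/-- The first `m` terms `y⁻¹ - y⁻³ + 3 y⁻⁵ - 15 y⁻⁷ + ⋯` of the divergent asymptotic series of the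
Mills ratio `(1 - Φ y) / φ y`. Truncated subtraction makes the first coefficient `(2 * 0 - 1)‼`
equal to `1`, as it should be. -/
noncomputable def millsPartialSum (m : ℕ) (y : ℝ) : ℝ :=
  ∑ k ∈ Finset.range m, (-1) ^ k * (2 * k - 1).doubleFactorial * y⁻¹ ^ (2 * k + 1)

lemma millsPartialSum_succ (m : ℕ) (y : ℝ) :
    millsPartialSum (m + 1) y =
      millsPartialSum m y + (-1) ^ m * (2 * m - 1).doubleFactorial * y⁻¹ ^ (2 * m + 1) :=
  Finset.sum_range_succ _ m

lemma tendsto_millsPartialSum_atTop (m : ℕ) : Tendsto (millsPartialSum m) atTop (𝓝 0) := by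
  have term (k : ℕ) : Tendsto
      (fun y : ℝ => (-1) ^ k * (2 * k - 1).doubleFactorial * y⁻¹ ^ (2 * k + 1)) atTop (𝓝 0) := by
    simpa using ((tendsto_inv_atTop_zero (𝕜 := ℝ)).pow (2 * k + 1)).const_mul
      ((-1) ^ k * ((2 * k - 1).doubleFactorial : ℝ))
  rw [← Finset.sum_const_zero (M := ℝ) (s := Finset.range m)]
  exact tendsto_finsetSum _ fun k _ => term k

lemma hasDerivAt_stdNormalPDF_mul_inv_pow {y : ℝ} (hy : y ≠ 0) (k : ℕ) :
    HasDerivAt (fun z => φ z * z⁻¹ ^ (k + 1)) (-φ y * (y⁻¹ ^ k + (k + 1) * y⁻¹ ^ (k + 2))) y := by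
  refine ((hasDerivAt_stdNormalPDF y).mul ((hasDerivAt_inv hy).pow (k + 1))).congr_deriv ?_
  simp only [Pi.pow_apply, Nat.add_sub_cancel]
  push_cast
  linear_combination (-φ y * y⁻¹ ^ k) * mul_inv_cancel₀ hy

lemma hasDerivAt_stdNormalPDF_mul_millsPartialSum (m : ℕ) {y : ℝ} (hy : y ≠ 0) :
    HasDerivAt (fun z => φ z * millsPartialSum m z)
      (-φ y * (1 - (-1) ^ m * (2 * m - 1).doubleFactorial * y⁻¹ ^ (2 * m))) y := by
  induction m with
  | zero => simpa [millsPartialSum] using hasDerivAt_const y (0 : ℝ)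
  | succ m ih =>
    have next_coeff : (2 * (m + 1) - 1).doubleFactorial =
        (2 * m + 1) * (2 * m - 1).doubleFactorial := Nat.doubleFactorial_add_one (2 * m)
    have last_term := (hasDerivAt_stdNormalPDF_mul_inv_pow hy (2 * m)).const_mul
      ((-1) ^ m * ((2 * m - 1).doubleFactorial : ℝ))
    refine ((ih.add last_term).congr_deriv ?_).congr_of_eventuallyEq (.of_forall fun z => ?_)
    · rw [next_coeff]
      push_cast
      ring
    · simp only [millsPartialSum_succ, Pi.add_apply]
      ring

lemma le_of_hasDerivAt_nonpos_of_tendsto {f f' : ℝ → ℝ} {a c : ℝ}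
    (hf : ∀ y, a < y → HasDerivAt f (f' y) y) (hf' : ∀ y, a < y → f' y ≤ 0)
    (hlim : Tendsto f atTop (𝓝 c)) {y : ℝ} (hy : a < y) : c ≤ f y := by
  have antitone : AntitoneOn f (Set.Ioi a) :=
    antitoneOn_of_hasDerivWithinAt_nonpos (convex_Ioi a)
      (fun z hz => (hf z hz).continuousAt.continuousWithinAt)
      (fun z hz => (hf z (by simpa using hz)).hasDerivWithinAt)
      (fun z hz => hf' z (by simpa using hz))
  refine le_of_tendsto hlim ?_
  filter_upwards [eventually_ge_atTop y] with z hz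
  exact antitone hy (hy.trans_le hz) hz

lemma neg_one_pow_mul_mills_remainder_nonneg (m : ℕ) {y : ℝ} (hy : 0 < y) :
    0 ≤ (-1) ^ m * (1 - stdNormalCDF y - φ y * millsPartialSum m y) := by
  refine le_of_hasDerivAt_nonpos_of_tendsto (a := 0)
    (f := fun z => (-1) ^ m * (1 - stdNormalCDF z - φ z * millsPartialSum m z))
    (f' := fun z => -(φ z * (2 * m - 1).doubleFactorial * z⁻¹ ^ (2 * m)))
    (fun z hz => ?_) (fun z hz => ?_) ?_ hy
  · refine ((((hasDerivAt_stdNormalCDF z).const_sub 1).sub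
      (hasDerivAt_stdNormalPDF_mul_millsPartialSum m hz.ne')).const_mul ((-1) ^ m)).congr_deriv ?_
    linear_combination (-φ z * (2 * m - 1).doubleFactorial * z⁻¹ ^ (2 * m)) *
      (Even.neg_one_pow ⟨m, rfl⟩ : (-1 : ℝ) ^ (m + m) = 1)
  · have := stdNormalPDF_pos z
    simp only [Left.neg_nonpos_iff]
    positivity
  · simpa using ((tendsto_stdNormalCDF_atTop.const_sub 1).sub
      (tendsto_stdNormalPDF_atTop.mul (tendsto_millsPartialSum_atTop m))).const_mul ((-1) ^ m)

lemma abs_mills_remainder_le (m : ℕ) {y : ℝ} (hy : 0 < y) :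
    |1 - stdNormalCDF y - φ y * millsPartialSum m y| ≤
      φ y * ((2 * m - 1).doubleFactorial * y⁻¹ ^ (2 * m + 1)) := by
  have sign_sq : ((-1 : ℝ) ^ m) ^ 2 = 1 := by rw [← pow_mul, mul_comm, pow_mul]; simp
  -- Consecutive partial sums lie on opposite sides of the Mills ratio.
  have lower := neg_one_pow_mul_mills_remainder_nonneg m hy
  have upper := neg_one_pow_mul_mills_remainder_nonneg (m + 1) hy
  rw [millsPartialSum_succ, pow_succ] at upper
  calc |1 - stdNormalCDF y - φ y * millsPartialSum m y|
      = (-1) ^ m * (1 - stdNormalCDF y - φ y * millsPartialSum m y) := by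
        rw [← abs_of_nonneg lower, abs_mul, abs_neg_one_pow, one_mul]
    _ ≤ φ y * ((2 * m - 1).doubleFactorial * y⁻¹ ^ (2 * m + 1)) := by
        linear_combination upper + φ y * (2 * m - 1).doubleFactorial * y⁻¹ ^ (2 * m + 1) * sign_sq

lemma HasQuadExpansion.mul_mills :
    HasQuadExpansion atTop (fun y : ℝ => y⁻¹ ^ 2) (fun y => y * (1 - stdNormalCDF y) / φ y)
      1 (-1) 3 := by
  refine .of_bound 15 ?_
  filter_upwards [eventually_gt_atTop 0] with y hy
  have pdf_pos := stdNormalPDF_pos y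
  calc ‖y * (1 - stdNormalCDF y) / φ y - (1 + -1 * y⁻¹ ^ 2 + 3 * (y⁻¹ ^ 2) ^ 2)‖
      = y / φ y * |1 - stdNormalCDF y - φ y * millsPartialSum 3 y| := by
        rw [← abs_of_pos (div_pos hy pdf_pos), ← abs_mul, norm_eq_abs]
        congr 1
        norm_num [millsPartialSum, Finset.sum_range_succ, Nat.doubleFactorial]
        field_simp
    _ ≤ y / φ y * (φ y * ((2 * 3 - 1).doubleFactorial * y⁻¹ ^ (2 * 3 + 1))) := by
        gcongr
        exact abs_mills_remainder_le 3 hy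
    _ = 15 * ‖(y⁻¹ ^ 2) ^ 3‖ := by
        rw [norm_of_nonneg (by positivity)]
        norm_num [Nat.doubleFactorial]
        field_simp

/-! ### The norming sequence -/

/-- `b n` is the positive solution of `2π b² exp (b²) = n²` for every `n ≥ 1`; equivalently
`n φ(b n) = b n`. -/
def IsNormingSequence (b : ℕ → ℝ) : Prop :=
  ∀ n : ℕ, 1 ≤ n → 0 < b n ∧ 2 * π * b n ^ 2 * Real.exp (b n ^ 2) = (n : ℝ) ^ 2

namespace IsNormingSequence

variable {b : ℕ → ℝ}

lemma natCast_mul_stdNormalPDF (hb : IsNormingSequence b) {n : ℕ} (hn : 1 ≤ n) :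
    n * φ (b n) = b n := by
  obtain ⟨b_pos, b_eq⟩ := hb n hn
  have pdf_pos := stdNormalPDF_pos (b n)
  refine (sq_eq_sq₀ (by positivity) b_pos.le).1 ?_
  have exp_sq : Real.exp (-(b n ^ 2 / 2)) ^ 2 * Real.exp (b n ^ 2) = 1 := by
    rw [← Real.exp_nat_mul, ← Real.exp_add, Real.exp_eq_one_iff]
    push_cast
    ring
  rw [mul_pow, ← b_eq, stdNormalPDF_eq, div_pow, sq_sqrt (by positivity)]
  field_simp
  linear_combination exp_sq

lemma tendsto_atTop (hb : IsNormingSequence b) : Tendsto b atTop atTop := by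
  refine Filter.tendsto_atTop.2 fun M => ?_
  have n_large := (tendsto_natCast_atTop_atTop (R := ℝ)).eventually_gt_atTop
    (2 * π * M ^ 2 * Real.exp (M ^ 2))
  filter_upwards [n_large, eventually_ge_atTop 1] with n hn hn1
  by_contra! b_lt
  obtain ⟨b_pos, b_eq⟩ := hb n hn1
  have n_sq_lt : (n : ℝ) ^ 2 < n := calc
    (n : ℝ) ^ 2 = 2 * π * b n ^ 2 * Real.exp (b n ^ 2) := b_eq.symm
    _ ≤ 2 * π * M ^ 2 * Real.exp (M ^ 2) := by gcongr
    _ < n := hn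
  have one_le_n : (1 : ℝ) ≤ n := by exact_mod_cast hn1
  nlinarith

lemma isBigO_inv_natCast (hb : IsNormingSequence b) :
    (fun n : ℕ => (n : ℝ)⁻¹) =O[atTop] fun n => ((b n)⁻¹ ^ 2) ^ 3 := by
  have pdf_isBigO := (isBigO_stdNormalPDF_inv_pow 5).comp_tendsto hb.tendsto_atTop
  refine (pdf_isBigO.mul (isBigO_refl (fun n => (b n)⁻¹) atTop)).congr' ?_
    (.of_forall fun n => by simp only [Function.comp_apply]; ring)
  filter_upwards [eventually_ge_atTop 1] with n hn
  have b_pos := (hb n hn).1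
  have n_ne : (n : ℝ) ≠ 0 := by positivity
  simp only [Function.comp_apply]
  field_simp
  linear_combination hb.natCast_mul_stdNormalPDF hn

end IsNormingSequence

/-! ### The threshold of powered extremes -/

/-- The argument `g_n(x) = (c_n x + d_n) ^ (1 / t)` at which the normal distribution is evaluated,
written as a function of `b = b_n`, with `c_n = t b ^ (t - 2)` and `d_n = b ^ t`. -/
noncomputable def poweredThreshold (t b x : ℝ) : ℝ :=
  (t * b ^ (t - 2) * x + b ^ t) ^ (1 / t)

lemma powered_normalization_eq {b : ℝ} (hb : 0 < b) (t x : ℝ) :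
    t * b ^ (t - 2) * x + b ^ t = b ^ t * (1 + t * x * b⁻¹ ^ 2) := by
  rw [rpow_sub hb, rpow_two]
  field_simp
  ring

lemma stdNormalPDF_mul_div_self (b w : ℝ) :
    φ (b * w) / φ b = Real.exp (-1 / 2 * ((w ^ 2 - 1) / b⁻¹ ^ 2)) := by
  rw [stdNormalPDF_eq, stdNormalPDF_eq, div_div_div_cancel_right₀ (by positivity), ← Real.exp_sub]
  congr 1
  rw [inv_pow, div_inv_eq_mul]
  ring

namespace poweredThreshold

section pointwise

variable {t b x : ℝ}

lemma eq_mul_rpow (ht : t ≠ 0) (hb : 0 < b) (hu : 0 ≤ 1 + t * x * b⁻¹ ^ 2) :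
    poweredThreshold t b x = b * (1 + t * x * b⁻¹ ^ 2) ^ (1 / t) := by
  rw [poweredThreshold, powered_normalization_eq hb, mul_rpow (by positivity) hu,
    ← rpow_mul hb.le, mul_one_div_cancel ht, rpow_one]

lemma hasDerivAt (ht : t ≠ 0) (hb : 0 < b) (hu : 0 < 1 + t * x * b⁻¹ ^ 2) :
    HasDerivAt (poweredThreshold t b) (b⁻¹ * (1 + t * x * b⁻¹ ^ 2) ^ ((1 - t) / t)) x := by
  have affine : HasDerivAt (fun y => t * b ^ (t - 2) * y + b ^ t) (t * b ^ (t - 2)) x := by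
    simpa using ((hasDerivAt_id x).const_mul (t * b ^ (t - 2))).add_const (b ^ t)
  have base_ne : t * b ^ (t - 2) * x + b ^ t ≠ 0 := by
    rw [powered_normalization_eq hb]
    positivity
  have powers_of_b : b ^ (t - 2) * b ^ (t * ((1 - t) / t)) = b⁻¹ := by
    rw [← rpow_add hb, ← rpow_neg_one]
    congr 1
    field_simp
    ring
  refine (affine.rpow_const (p := 1 / t) (.inl base_ne)).congr_deriv ?_
  rw [powered_normalization_eq hb, show 1 / t - 1 = (1 - t) / t by field_simp,
    mul_rpow (by positivity) hu.le, ← rpow_mul hb.le, ← powers_of_b]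
  field_simp

end pointwise

section expansion

variable {ι : Type*} {l : Filter ι} {b : ι → ℝ} {t : ℝ}

lemma tendsto_inv_sq (hb : Tendsto b l atTop) : Tendsto (fun i => (b i)⁻¹ ^ 2) l (𝓝 0) := by
  simpa using (tendsto_inv_atTop_zero.comp hb).pow 2

lemma eventually_ratio_pos (hb : Tendsto b l atTop) (t x : ℝ) :
    ∀ᶠ i in l, 0 < 1 + t * x * (b i)⁻¹ ^ 2 := by
  have : Tendsto (fun i => 1 + t * x * (b i)⁻¹ ^ 2) l (𝓝 1) := by
    simpa using ((tendsto_inv_sq hb).const_mul (t * x)).const_add 1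
  exact this.eventually_const_lt one_pos

lemma eventually_eq_mul_rpow (hb : Tendsto b l atTop) (ht : t ≠ 0) (x : ℝ) :
    ∀ᶠ i in l, poweredThreshold t (b i) x = b i * (1 + t * x * (b i)⁻¹ ^ 2) ^ (1 / t) := by
  filter_upwards [hb.eventually_gt_atTop 0, eventually_ratio_pos hb t x] with i hbi hui
  exact eq_mul_rpow ht hbi hui.le

lemma hasQuadExpansion_ratio_rpow (hb : Tendsto b l atTop) (ht : t ≠ 0) (x p : ℝ) :
    HasQuadExpansion l (fun i => (b i)⁻¹ ^ 2) (fun i => (1 + t * x * (b i)⁻¹ ^ 2) ^ (p / t))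
      1 (p * x) (p * (p - t) / 2 * x ^ 2) :=
  (HasQuadExpansion.one_add_mul_rpow (tendsto_inv_sq hb) (t * x) (p / t)).congr_coeff rfl
    (by field_simp) (by field_simp)

lemma tendsto_atTop (hb : Tendsto b l atTop) (ht : t ≠ 0) (x : ℝ) :
    Tendsto (fun i => poweredThreshold t (b i) x) l atTop := by
  have ratio := (hasQuadExpansion_ratio_rpow hb ht x 1).tendsto (tendsto_inv_sq hb)
  exact (hb.atTop_mul_pos one_pos ratio).congr' <|
    (eventually_eq_mul_rpow hb ht x).mono fun i hi => hi.symm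

lemma hasQuadExpansion_stdNormalPDF (hb : Tendsto b l atTop) (ht : t ≠ 0) (x : ℝ) :
    HasQuadExpansion l (fun i => (b i)⁻¹ ^ 2) (fun i => φ (poweredThreshold t (b i) x) / φ (b i))
      (Real.exp (-x)) (Real.exp (-x) * -((2 - t) / 2 * x ^ 2))
      (Real.exp (-x) * (-((2 - t) * (1 - t) / 3 * x ^ 3) + ((2 - t) / 2 * x ^ 2) ^ 2 / 2)) := by
  have scale := tendsto_inv_sq hb
  have scale_ne : ∀ᶠ i in l, (b i)⁻¹ ^ 2 ≠ 0 := by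
    filter_upwards [hb.eventually_gt_atTop 0] with i hi
    positivity
  have exponent := ((HasQuadExpansion.one_add_mul_rpow_slope scale scale_ne (t * x)
    (2 / t)).const_mul (-1 / 2)).congr_coeff (b₀ := -x) (b₁ := -((2 - t) / 2 * x ^ 2))
      (b₂ := -((2 - t) * (1 - t) / 3 * x ^ 3)) (by field_simp) (by field_simp)
      (by field_simp; ring)
  refine ((exponent.exp scale).congr' ?_).congr_coeff rfl rfl (by ring)
  filter_upwards [eventually_eq_mul_rpow hb ht x, eventually_ratio_pos hb t x] with i hgi hui
  rw [hgi, stdNormalPDF_mul_div_self, ← rpow_mul_natCast hui.le]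
  congr 5
  push_cast
  ring

lemma hasQuadExpansion_inv_sq (hb : Tendsto b l atTop) (ht : t ≠ 0) (x : ℝ) :
    HasQuadExpansion l (fun i => (b i)⁻¹ ^ 2) (fun i => (poweredThreshold t (b i) x)⁻¹ ^ 2)
      0 1 (-2 * x) := by
  refine ((HasQuadExpansion.self.mul (tendsto_inv_sq hb)
    (hasQuadExpansion_ratio_rpow hb ht x (-2))).congr' ?_).congr_coeff
      (by ring) (by ring) (by ring)
  filter_upwards [eventually_eq_mul_rpow hb ht x, eventually_ratio_pos hb t x] with i hgi hui
  rw [hgi, mul_inv, ← rpow_neg hui.le, mul_pow, ← rpow_mul_natCast hui.le]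
  congr 2
  push_cast
  ring

lemma hasQuadExpansion_stdNormalTail (hb : Tendsto b l atTop) (ht : t ≠ 0) (x : ℝ) :
    HasQuadExpansion l (fun i => (b i)⁻¹ ^ 2)
      (fun i => b i * (1 - stdNormalCDF (poweredThreshold t (b i) x)) / φ (b i))
      (Real.exp (-x)) (-(Real.exp (-x) * (1 + x + (2 - t) / 2 * x ^ 2)))
      (Real.exp (-x) * (3 + 3 * x + 3 / 2 * x ^ 2 + (2 - t) * (2 * t + 1) / 6 * x ^ 3 +
        (t - 2) ^ 2 / 8 * x ^ 4)) := by
  have scale := tendsto_inv_sq hb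
  have mills := HasQuadExpansion.mul_mills.comp (tendsto_atTop hb ht x) scale
    (hasQuadExpansion_inv_sq hb ht x)
  refine ((((hasQuadExpansion_stdNormalPDF hb ht x).mul scale
    (hasQuadExpansion_ratio_rpow hb ht x (-1))).mul scale mills).congr' ?_).congr_coeff
      (by ring) (by ring) (by ring)
  filter_upwards [eventually_eq_mul_rpow hb ht x, eventually_ratio_pos hb t x,
    hb.eventually_gt_atTop 0] with i hgi hui hbi
  have pdf_ne := (stdNormalPDF_pos (poweredThreshold t (b i) x)).ne'
  have ratio_eq : (1 + t * x * (b i)⁻¹ ^ 2) ^ (-1 / t) * poweredThreshold t (b i) x = b i := by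
    rw [hgi, mul_left_comm, ← rpow_add hui, ← add_div]
    simp
  calc φ (poweredThreshold t (b i) x) / φ (b i) * (1 + t * x * (b i)⁻¹ ^ 2) ^ (-1 / t) *
        (poweredThreshold t (b i) x * (1 - stdNormalCDF (poweredThreshold t (b i) x)) /
          φ (poweredThreshold t (b i) x))
      = (1 + t * x * (b i)⁻¹ ^ 2) ^ (-1 / t) * poweredThreshold t (b i) x *
          (1 - stdNormalCDF (poweredThreshold t (b i) x)) / φ (b i) := by field_simp
    _ = b i * (1 - stdNormalCDF (poweredThreshold t (b i) x)) / φ (b i) := by rw [ratio_eq]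

lemma hasQuadExpansion_density (hb : Tendsto b l atTop) (ht : t ≠ 0) (x : ℝ) :
    HasQuadExpansion l (fun i => (b i)⁻¹ ^ 2)
      (fun i => φ (poweredThreshold t (b i) x) / φ (b i) *
        (1 + t * x * (b i)⁻¹ ^ 2) ^ ((1 - t) / t))
      (Real.exp (-x)) (Real.exp (-x) * (x * (1 - t + (t - 2) / 2 * x)))
      (Real.exp (-x) * (x ^ 2 * ((1 - t) * (1 - 2 * t) / 2 + 5 * (1 - t) * (t - 2) / 6 * x +
        (t - 2) ^ 2 / 8 * x ^ 2))) :=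
  ((hasQuadExpansion_stdNormalPDF hb ht x).mul (tendsto_inv_sq hb)
    (hasQuadExpansion_ratio_rpow hb ht x (1 - t))).congr_coeff (by ring) (by ring) (by ring)

end expansion

end poweredThreshold

/-! ### The density of powered extremes -/

/-- The distribution function `F_n(x) = Φ(g_n(x)) ^ n - (1 - Φ(g_n(x))) ^ n` of the normalized
powered maximum of `n` normal variables, written as a function of `b = b_n`. -/
noncomputable def poweredExtremeCDF (t b : ℝ) (n : ℕ) (x : ℝ) : ℝ :=
  stdNormalCDF (poweredThreshold t b x) ^ n - (1 - stdNormalCDF (poweredThreshold t b x)) ^ n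

/-- The coefficient `ϖ` of `b_n⁻²` in the expansion of `F_n'(x) / Λ'(x)`. -/
noncomputable def firstCorrection (t x : ℝ) : ℝ :=
  x * (1 - t + (t - 2) / 2 * x) + Real.exp (-x) * (1 + x + (2 - t) / 2 * x ^ 2)

/-- The coefficient `τ` of `b_n⁻⁴` in the expansion of `F_n'(x) / Λ'(x)`. -/
noncomputable def secondCorrection (t x : ℝ) : ℝ :=
  x * Real.exp (-x) * (1 - t + (t - 2) / 2 * x) * (1 + x + (2 - t) / 2 * x ^ 2) +
    x ^ 2 * ((1 - t) * (1 - 2 * t) / 2 + 5 * (1 - t) * (t - 2) / 6 * x +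
      (t - 2) ^ 2 / 8 * x ^ 2) -
    Real.exp (-x) *
      (3 + 3 * x + 3 / 2 * x ^ 2 + (2 - t) * (2 * t + 1) / 6 * x ^ 3 + (t - 2) ^ 2 / 8 * x ^ 4 -
        Real.exp (-x) / 2 * (1 + x + (2 - t) / 2 * x ^ 2) ^ 2)

lemma hasDerivAt_pow_sub_one_sub_pow {f : ℝ → ℝ} {f' x : ℝ} (hf : HasDerivAt f f' x) (n : ℕ) :
    HasDerivAt (fun y => f y ^ n - (1 - f y) ^ n)
      (n * f' * (f x ^ (n - 1) + (1 - f x) ^ (n - 1))) x :=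
  ((hf.pow n).sub ((hf.const_sub 1).pow n)).congr_deriv (by ring)

lemma poweredExtremeCDF.deriv_eq {t b x : ℝ} {n : ℕ} (ht : t ≠ 0) (hb : 0 < b)
    (hn : n * φ b = b) (hu : 0 < 1 + t * x * b⁻¹ ^ 2) :
    deriv (poweredExtremeCDF t b n) x =
      φ (poweredThreshold t b x) / φ b * (1 + t * x * b⁻¹ ^ 2) ^ ((1 - t) / t) *
        (stdNormalCDF (poweredThreshold t b x) ^ (n - 1) +
          (1 - stdNormalCDF (poweredThreshold t b x)) ^ (n - 1)) := by
  have cdf_deriv := (hasDerivAt_stdNormalCDF _).comp x (poweredThreshold.hasDerivAt ht hb hu)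
  have n_eq : n * b⁻¹ = (φ b)⁻¹ := by
    have := stdNormalPDF_pos b
    field_simp
    exact hn
  rw [div_eq_mul_inv _ (φ b), ← n_eq]
  refine (hasDerivAt_pow_sub_one_sub_pow cdf_deriv n).deriv.trans ?_
  simp only [Function.comp_apply]
  ring

lemma poweredExtremeCDF.hasQuadExpansion_deriv {b : ℕ → ℝ} (hb : IsNormingSequence b) {t : ℝ}
    (ht : t ≠ 0) (x : ℝ) :
    HasQuadExpansion atTop (fun n => (b n)⁻¹ ^ 2) (fun n => deriv (poweredExtremeCDF t (b n) n) x)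
      (gumbel x * Real.exp (-x)) (gumbel x * Real.exp (-x) * firstCorrection t x)
      (gumbel x * Real.exp (-x) * secondCorrection t x) := by
  have b_tendsto := hb.tendsto_atTop
  have scale := poweredThreshold.tendsto_inv_sq b_tendsto
  have expected_exceedances := (poweredThreshold.hasQuadExpansion_stdNormalTail b_tendsto ht
    x).congr' (g := fun n : ℕ => n * (1 - stdNormalCDF (poweredThreshold t (b n) x))) (by
      filter_upwards [eventually_ge_atTop 1] with n hn
      have := stdNormalPDF_pos (b n)
      nth_rw 1 [← hb.natCast_mul_stdNormalPDF hn]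
      field_simp)
  have powers := expected_exceedances.one_sub_pow_pred_add_pow_pred scale hb.isBigO_inv_natCast
  have density := poweredThreshold.hasQuadExpansion_density b_tendsto ht x
  refine ((density.mul scale powers).congr' ?_).congr_coeff (mul_comm _ _) ?_ ?_
  · filter_upwards [eventually_ge_atTop 1, poweredThreshold.eventually_ratio_pos b_tendsto t x]
      with n hn hun
    rw [poweredExtremeCDF.deriv_eq ht (hb n hn).1 (hb.natCast_mul_stdNormalPDF hn) hun,
      sub_sub_cancel]
  · rw [gumbel, firstCorrection]
    ring
  · rw [gumbel, secondCorrection]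
    ring

lemma HasQuadExpansion.exists_abs_sub_le {ι : Type*} {l : Filter ι} {b f : ι → ℝ}
    {a₀ a₁ a₂ : ℝ} (hf : HasQuadExpansion l (fun i => (b i)⁻¹ ^ 2) f a₀ a₁ a₂) :
    ∃ C > 0, ∀ᶠ i in l, |f i - (a₀ + a₁ / b i ^ 2 + a₂ / b i ^ 4)| ≤ C / b i ^ 6 := by
  obtain ⟨C, C_pos, bound⟩ := IsBigO.exists_pos hf
  refine ⟨C, C_pos, bound.bound.mono fun i hi => ?_⟩
  have scale_cube : ‖((b i)⁻¹ ^ 2) ^ 3‖ = (b i ^ 6)⁻¹ := by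
    rw [norm_of_nonneg (by positivity)]
    ring
  rw [scale_cube, norm_eq_abs, ← div_eq_mul_inv] at hi
  convert hi using 3
  ring

theorem powered_extremes_density_higher_order_expansion_t_ne_two_general
    (b : ℕ → ℝ)
    (hb : ∀ n : ℕ, 1 ≤ n → 0 < b n ∧
      2 * Real.pi * (b n) ^ 2 * Real.exp ((b n) ^ 2) = (n : ℝ) ^ 2)
    (t : ℝ) (ht : t ≠ 0) (x : ℝ)
    (c d : ℕ → ℝ)
    (hc : ∀ n : ℕ, c n = t * b n ^ (t - 2))
    (hd : ∀ n : ℕ, d n = b n ^ t) :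
    ∃ C > (0 : ℝ), ∃ N : ℕ, ∀ n : ℕ, N ≤ n →
      0 < c n * x + d n ∧
      |deriv (fun y : ℝ =>
          stdNormalCDF ((c n * y + d n) ^ (1 / t)) ^ n -
            (1 - stdNormalCDF ((c n * y + d n) ^ (1 / t))) ^ n) x -
        gumbel x * Real.exp (-x) *
          (1 + (x * (1 - t + (t - 2) / 2 * x) +
              Real.exp (-x) * (1 + x + (2 - t) / 2 * x ^ 2)) / (b n) ^ 2 +
            (x * Real.exp (-x) * (1 - t + (t - 2) / 2 * x) *
                (1 + x + (2 - t) / 2 * x ^ 2) +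
              x ^ 2 * ((1 - t) * (1 - 2 * t) / 2 + 5 * (1 - t) * (t - 2) / 6 * x +
                (t - 2) ^ 2 / 8 * x ^ 2) -
              Real.exp (-x) *
                (3 + 3 * x + 3 / 2 * x ^ 2 + (2 - t) * (2 * t + 1) / 6 * x ^ 3 +
                  (t - 2) ^ 2 / 8 * x ^ 4 -
                  Real.exp (-x) / 2 * (1 + x + (2 - t) / 2 * x ^ 2) ^ 2)) / (b n) ^ 4)|
      ≤ C / (b n) ^ 6 := by
  obtain ⟨C, C_pos, bound⟩ := (poweredExtremeCDF.hasQuadExpansion_deriv hb ht x).exists_abs_sub_le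
  have ratio_pos :=
    poweredThreshold.eventually_ratio_pos (IsNormingSequence.tendsto_atTop hb) t x
  obtain ⟨N, hN⟩ := eventually_atTop.1 (bound.and (ratio_pos.and (eventually_ge_atTop 1)))
  refine ⟨C, C_pos, N, fun n hn => ?_⟩
  obtain ⟨error_le, ratio_pos, one_le_n⟩ := hN n hn
  have b_pos := (hb n one_le_n).1
  rw [hc, hd]
  constructor
  · rw [powered_normalization_eq b_pos]
    positivity
  · refine (le_of_eq ?_).trans error_le
    change |deriv (poweredExtremeCDF t (b n) n) x - gumbel x * Real.exp (-x) *
      (1 + firstCorrection t x / b n ^ 2 + secondCorrection t x / b n ^ 4)| = _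
    congr 2
    ring

/-- Theorem 2.2, `t ≠ 2`: With `b_n` the unique positive solution of
`2π b_n² exp(b_n²) = n²`, `c_n = t b_n^{t−2}`, `d_n = b_n^t` (for `t > 0`, `t ≠ 2`) and
`F_n(y) = Φ((c_n y + d_n)^{1/t})^n − (1 − Φ((c_n y + d_n)^{1/t}))^n`:
`F_n'(x) = Λ(x) e^{−x}(1 + b_n^{−2}(ϖ + b_n^{−2} τ + O(b_n^{−4})))`, where
`ϖ = x(1 − t + ((t−2)/2)x) + e^{−x}(1 + x + ((2−t)/2)x²)` and
`τ = x e^{−x}(1 − t + ((t−2)/2)x)(1 + x + ((2−t)/2)x²)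
  + x²((1−t)(1−2t)/2 + (5(1−t)(t−2)/6)x + ((t−2)²/8)x²)
  − e^{−x}(3 + 3x + (3/2)x² + ((2−t)(2t+1)/6)x³ + ((t−2)²/8)x⁴
  − (e^{−x}/2)(1 + x + ((2−t)/2)x²)²)`. -/
theorem powered_extremes_density_higher_order_expansion_t_ne_two
    (b : ℕ → ℝ)
    (hb : ∀ n : ℕ, 1 ≤ n → 0 < b n ∧
      2 * Real.pi * (b n) ^ 2 * Real.exp ((b n) ^ 2) = (n : ℝ) ^ 2)
    (t : ℝ) (ht : 0 < t) (ht2 : t ≠ 2) (x : ℝ)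
    (c d : ℕ → ℝ)
    (hc : ∀ n : ℕ, c n = t * b n ^ (t - 2))
    (hd : ∀ n : ℕ, d n = b n ^ t) :
    ∃ C > (0 : ℝ), ∃ N : ℕ, ∀ n : ℕ, N ≤ n →
      0 < c n * x + d n ∧
      |deriv (fun y : ℝ =>
          stdNormalCDF ((c n * y + d n) ^ (1 / t)) ^ n -
            (1 - stdNormalCDF ((c n * y + d n) ^ (1 / t))) ^ n) x -
        gumbel x * Real.exp (-x) *
          (1 + (x * (1 - t + (t - 2) / 2 * x) +
              Real.exp (-x) * (1 + x + (2 - t) / 2 * x ^ 2)) / (b n) ^ 2 +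
            (x * Real.exp (-x) * (1 - t + (t - 2) / 2 * x) *
                (1 + x + (2 - t) / 2 * x ^ 2) +
              x ^ 2 * ((1 - t) * (1 - 2 * t) / 2 + 5 * (1 - t) * (t - 2) / 6 * x +
                (t - 2) ^ 2 / 8 * x ^ 2) -
              Real.exp (-x) *
                (3 + 3 * x + 3 / 2 * x ^ 2 + (2 - t) * (2 * t + 1) / 6 * x ^ 3 +
                  (t - 2) ^ 2 / 8 * x ^ 4 -
                  Real.exp (-x) / 2 * (1 + x + (2 - t) / 2 * x ^ 2) ^ 2)) / (b n) ^ 4)|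
      ≤ C / (b n) ^ 6 :=
  powered_extremes_density_higher_order_expansion_t_ne_two_general b hb t ht.ne' x c d hc hd
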